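/- arXiv:2408.09809 — 2 statements merged into one kernel-verified Lean document; each statement's English description precedes it below -/
import Mathlib

section
/- Let n ≥ 2 and suppose the growth function is f(k) = n^k. Then for every d ≥ 1 and μ ≥ 0, the cardinality of the nested Smolyak grid is N(d,μ) = n^d · Σ_{k=0}^{min(d−1,μ)} C(d−1,k) · (−1)^k · C(d+μ−k−1, μ−k) · n^{μ−k} (an identity in ℤ). -/
/-- Multi-indices `i : Fin d → ℕ` with `i k ≥ 1` for all `k` and `∑ k, i k = d + μ`. -/
def smolyakIndices (d μ : ℕ) : Finset (Fin d → ℕ) :=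
  (Fintype.piFinset fun _ => Finset.Icc 1 (d + μ)).filter fun i => ∑ k, i k = d + μ

/-- The Smolyak grid `Γ(d, μ)` based on the node sets `S`. -/
noncomputable def smolyakGrid (S : ℕ → Finset ℝ) (d μ : ℕ) : Finset (Fin d → ℝ) :=
  (smolyakIndices d μ).biUnion fun i => Fintype.piFinset fun k => S (i k)

/-- `N(d, μ)`: the number of nodes in the Smolyak grid. -/
noncomputable def smolyakCard (S : ℕ → Finset ℝ) (d μ : ℕ) : ℕ :=
  (smolyakGrid S d μ).card

open PowerSeries in
lemma aux_coeff (n : ℕ) (e μ : ℕ) :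
  coeff μ ((1 - X : PowerSeries ℤ)^e * (PowerSeries.mk fun j => (n:ℤ)^j)^(e+1)) = ∑ k ∈ Finset.range (min e μ + 1),
        (e.choose k : ℤ) * (-1) ^ k * ((e + 1 + μ - k - 1).choose (μ - k) : ℤ) *
          (n : ℤ) ^ (μ - k) := by
  have hA : (PowerSeries.mk fun j => (n:ℤ)^j)^(e+1) = PowerSeries.mk fun j => (((e+j).choose e : ℕ) : ℤ) * (n:ℤ)^j := by
    have h1 : (PowerSeries.mk fun j => (n:ℤ)^j) = rescale (n:ℤ) (PowerSeries.mk 1) := by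
      ext j; simp [coeff_rescale]
    rw [h1, ← map_pow, mk_one_pow_eq_mk_choose_add]
    ext j; simp [coeff_rescale, mul_comm]
  have hB : ∀ k, coeff k ((1 - X : PowerSeries ℤ)^e) = (-1)^k * (e.choose k : ℤ) := by
    intro k
    have h1 : (1 - X : PowerSeries ℤ)^e = rescale (-1 : ℤ) (((1 + Polynomial.X : Polynomial ℤ)^e : Polynomial ℤ) : PowerSeries ℤ) := by
      simp [rescale_X, sub_eq_add_neg]
    rw [h1, coeff_rescale, Polynomial.coeff_coe, Polynomial.coeff_one_add_X_pow]
  rw [hA, coeff_mul, Finset.Nat.sum_antidiagonal_eq_sum_range_succ_mk]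
  symm
  apply Finset.sum_subset_zero_on_sdiff
  · intro k; simp only [Finset.mem_range]; omega
  · intro k hk
    simp only [Finset.mem_sdiff, Finset.mem_range] at hk
    have : e < k := by omega
    simp [hB, Nat.choose_eq_zero_of_lt this]
  · intro k hk
    simp only [Finset.mem_range] at hk
    rw [hB, coeff_mk, show e + 1 + μ - k - 1 = e + (μ - k) by omega, Nat.choose_symm_add]
    ring

lemma aux_gen (n : ℕ) (c : ℕ → ℕ) (h0 : c 0 = n) (hc : ∀ j, (c (j+1) : ℤ) = (n:ℤ)^(j+2) - (n:ℤ)^(j+1)) (e μ : ℕ) :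
   ∑ m ∈ Finset.range (μ+1), PowerSeries.coeff m ((PowerSeries.mk fun j => (c j : ℤ))^(e+1)) =
    (n:ℤ)^(e+1) * PowerSeries.coeff μ ((1 - PowerSeries.X : PowerSeries ℤ)^e * (PowerSeries.mk fun j => (n:ℤ)^j)^(e+1)) := by
  open PowerSeries in
  have hg : (PowerSeries.mk fun j => (c j : ℤ)) = C (n:ℤ) * ((1 - X) * (PowerSeries.mk fun j => (n:ℤ)^j)) := by
    ext j
    rw [coeff_C_mul, sub_mul, one_mul, map_sub]
    cases j with
    | zero => simp [h0]
    | succ j => rw [coeff_succ_X_mul]; simp [hc]; ring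
  have hs : ∀ F : PowerSeries ℤ, ∑ m ∈ Finset.range (μ+1), coeff m F = coeff μ (F * PowerSeries.mk 1) := by
    intro F
    rw [coeff_mul, Finset.Nat.sum_antidiagonal_eq_sum_range_succ_mk]
    simp
  rw [hs, ← coeff_C_mul, hg]
  congr 1
  have := mk_one_mul_one_sub_eq_one ℤ
  rw [map_pow, mul_pow, mul_pow, pow_succ (1 - X : PowerSeries ℤ)]
  linear_combination (C (n:ℤ) ^(e+1) * (1-X)^e * (PowerSeries.mk fun j => (n:ℤ)^j)^(e+1)) * this

lemma aux_pow (c : ℕ → ℕ) (d m : ℕ) : 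
   PowerSeries.coeff m ((PowerSeries.mk fun j => (c j : ℤ))^d) = ∑ j ∈ Finset.piAntidiag (Finset.univ : Finset (Fin d)) m, ∏ k, (c (j k) : ℤ) := by
  have := PowerSeries.coeff_prod (fun _ : Fin d => (PowerSeries.mk fun j => (c j : ℤ))) m Finset.univ
  rw [Finset.prod_const, Finset.card_univ, Fintype.card_fin] at this
  rw [this]
  refine Finset.sum_bij' (fun l _ => (l : Fin d → ℕ)) (fun j _ => Finsupp.equivFunOnFinite.symm j)
    ?_ ?_ ?_ ?_ ?_
  · intro l hl
    simpa [Finset.mem_finsuppAntidiag] using hl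
  · intro l hl
    simpa [Finset.mem_finsuppAntidiag] using hl
  · intro l hl
    ext; simp
  · intro l hl
    ext; simp
  · intro l hl
    simp

/-- The nodes that are new at level `j + 1`. -/
noncomputable def newNodes (S : ℕ → Finset ℝ) (j : ℕ) : Finset ℝ :=
  if j = 0 then S 1 else S (j + 1) \ S j

lemma nested_mono (S : ℕ → Finset ℝ) (hS : ∀ k, 1 ≤ k → S k ⊆ S (k + 1)) {a b : ℕ}
    (ha : 1 ≤ a) (hab : a ≤ b) : S a ⊆ S b := by
  induction b, hab using Nat.le_induction with
  | base => exact subset_rfl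
  | succ b hb ih => exact ih.trans (hS b (ha.trans hb))

lemma newNodes_sub (S : ℕ → Finset ℝ) (j : ℕ) : newNodes S j ⊆ S (j + 1) := by
  unfold newNodes
  split_ifs with h
  · simp [h]
  · exact Finset.sdiff_subset

lemma newNodes_inj (S : ℕ → Finset ℝ) (hS : ∀ k, 1 ≤ k → S k ⊆ S (k + 1)) {a b : ℕ} {x : ℝ}
    (ha : x ∈ newNodes S a) (hb : x ∈ newNodes S b) : a = b := by
  have key : ∀ a b : ℕ, x ∈ newNodes S a → x ∈ newNodes S b → ¬ a < b := by
    intro a b ha hb hab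
    have h1 := nested_mono S hS (by omega) (show a + 1 ≤ b by omega) (newNodes_sub S a ha)
    unfold newNodes at hb
    rw [if_neg (by omega), Finset.mem_sdiff] at hb
    exact hb.2 h1
  have h1 := key a b ha hb
  have h2 := key b a hb ha
  omega

lemma exists_newNodes (S : ℕ → Finset ℝ) {a : ℕ} (ha : 1 ≤ a) {x : ℝ} (hx : x ∈ S a) :
    ∃ j, j + 1 ≤ a ∧ x ∈ newNodes S j := by
  classical
  have hex : ∃ j, x ∈ S (j + 1) := ⟨a - 1, by rwa [Nat.sub_add_cancel ha]⟩
  refine ⟨Nat.find hex, ?_, ?_⟩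
  · have := Nat.find_min' hex (m := a - 1) (by rwa [Nat.sub_add_cancel ha])
    omega
  · have h1 := Nat.find_spec hex
    have h2 := fun m => Nat.find_min hex (m := m)
    generalize Nat.find hex = t at h1 h2
    unfold newNodes
    split_ifs with h
    · simpa [h] using h1
    · refine Finset.mem_sdiff.2 ⟨h1, ?_⟩
      have := h2 (t - 1) (by omega)
      rwa [Nat.sub_add_cancel (by omega)] at this

lemma smolyakGrid_eq (S : ℕ → Finset ℝ) (hS : ∀ k, 1 ≤ k → S k ⊆ S (k + 1)) (e μ : ℕ) :
    smolyakGrid S (e + 1) μ =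
      ((Finset.range (μ + 1)).biUnion fun m =>
        Finset.piAntidiag (Finset.univ : Finset (Fin (e + 1))) m).biUnion
        fun j => Fintype.piFinset fun k => newNodes S (j k) := by
  ext x
  simp only [smolyakGrid, smolyakIndices, Finset.mem_biUnion, Finset.mem_filter,
    Fintype.mem_piFinset, Finset.mem_Icc, Finset.mem_range, Finset.mem_piAntidiag,
    Finset.mem_univ, implies_true, and_true]
  constructor
  · rintro ⟨i, ⟨hi, hsum⟩, hx⟩
    choose j hj hxj using fun k => exists_newNodes S (hi k).1 (hx k)
    refine ⟨j, ⟨_, ?_, rfl⟩, hxj⟩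
    have : ∑ k, (j k + 1) ≤ ∑ k, i k := Finset.sum_le_sum fun k _ => hj k
    rw [Finset.sum_add_distrib, hsum] at this
    simp at this
    change (∑ k, j k) < μ + 1
    omega
  · rintro ⟨j, ⟨m, hm, hsum⟩, hx⟩
    have hs : ∑ k, (j k + 1 + if k = 0 then μ - m else 0) = e + 1 + μ := by
      rw [Finset.sum_add_distrib, Finset.sum_add_distrib, hsum]
      simp
      omega
    refine ⟨fun k => j k + 1 + if k = 0 then μ - m else 0, ⟨fun k => ⟨?_, ?_⟩, hs⟩, ?_⟩
    · change 1 ≤ j k + 1 + _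
      omega
    · rw [← hs]
      exact Finset.single_le_sum (f := fun k => j k + 1 + if k = 0 then μ - m else 0)
        (fun _ _ => Nat.zero_le _) (Finset.mem_univ k)
    · intro k
      exact nested_mono S hS (Nat.succ_pos _) (Nat.le_add_right _ _) (newNodes_sub S _ (hx k))

lemma smolyakCard_eq (S : ℕ → Finset ℝ) (hS : ∀ k, 1 ≤ k → S k ⊆ S (k + 1)) (e μ : ℕ) :
    smolyakCard S (e + 1) μ = ∑ m ∈ Finset.range (μ + 1),
      ∑ j ∈ Finset.piAntidiag (Finset.univ : Finset (Fin (e + 1))) m,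
        ∏ k, (newNodes S (j k)).card := by
  rw [smolyakCard, smolyakGrid_eq S hS, Finset.card_biUnion, Finset.sum_biUnion]
  · simp only [Fintype.card_piFinset]
  · intro a _ b _ hab
    refine Finset.disjoint_left.2 fun j ha hb => hab ?_
    rw [Finset.mem_piAntidiag] at ha hb
    exact ha.1.symm.trans hb.1
  · intro a _ b _ hab
    refine Finset.disjoint_left.2 fun x ha hb => hab ?_
    rw [Fintype.mem_piFinset] at ha hb
    exact funext fun k => newNodes_inj S hS (ha k) (hb k)

/-- For the growth function `f(k) = nᵏ` (with `n ≥ 2`), the nested Smolyak grid has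
`N(d, μ) = n^d · ∑_{k=0}^{min(d-1, μ)} C(d-1, k) (-1)ᵏ C(d+μ-k-1, μ-k) n^(μ-k)` nodes
(an identity in `ℤ`). -/
theorem smolyakCard_of_pow
    (n : ℕ) (hn : 2 ≤ n)
    (S : ℕ → Finset ℝ) (hS_nested : ∀ k, 1 ≤ k → S k ⊆ S (k + 1))
    (hS_card : ∀ k, 1 ≤ k → (S k).card = n ^ k)
    (d μ : ℕ) (hd : 1 ≤ d) :
    (smolyakCard S d μ : ℤ) =
      (n : ℤ) ^ d * ∑ k ∈ Finset.range (min (d - 1) μ + 1),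
        ((d - 1).choose k : ℤ) * (-1) ^ k * ((d + μ - k - 1).choose (μ - k) : ℤ) *
          (n : ℤ) ^ (μ - k) := by
  obtain ⟨e, rfl⟩ : ∃ e, d = e + 1 := ⟨d - 1, by omega⟩
  have h0 : (newNodes S 0).card = n := by simp [newNodes, hS_card 1 le_rfl]
  have hc : ∀ j, ((newNodes S (j + 1)).card : ℤ) = (n : ℤ) ^ (j + 2) - (n : ℤ) ^ (j + 1) := by
    intro j
    have hsub := hS_nested (j + 1) (by omega)
    have h1 := Finset.card_sdiff_add_card_eq_card hsub
    rw [hS_card _ (by omega), hS_card _ (by omega)] at h1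
    have h2 : newNodes S (j + 1) = S (j + 1 + 1) \ S (j + 1) := by simp [newNodes]
    rw [h2, eq_sub_iff_add_eq]
    exact_mod_cast h1
  have h := aux_gen n (fun j => (newNodes S j).card) h0 hc e μ
  rw [aux_coeff] at h
  simp only [aux_pow] at h
  rw [smolyakCard_eq S hS_nested, Nat.add_sub_cancel, ← h]
  push_cast
  rfl
end

section
/- Let f(k) = k. Then for every d ≥ 1 and μ ≥ 0, 𝒩(d,μ,f) = C(2d+μ−1, μ). -/
/-- `𝒩(d, μ, f) = ∑_{|i| = d + μ, i ≥ 1} ∏ₖ f(iₖ)`. -/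
def calN (f : ℕ → ℕ) (d μ : ℕ) : ℕ :=
  ∑ i ∈ smolyakIndices d μ, ∏ k, f (i k)

/-- For `f(k) = k`, `𝒩(d, μ, f) = C(2d+μ-1, μ)`. -/
theorem calN_of_id (d μ : ℕ) (hd : 1 ≤ d) :
    calN (fun k => k) d μ = (2 * d + μ - 1).choose μ := by
  have hP : (PowerSeries.mk (fun n => ((n + 1 : ℕ) : ℤ))) = (PowerSeries.mk 1 : PowerSeries ℤ) ^ 2 := by
    rw [PowerSeries.mk_one_pow_eq_mk_choose_add ℤ 1]
    ext n
    simp [add_comm]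
  have h1 : PowerSeries.coeff μ (∏ _k : Fin d, PowerSeries.mk (fun n => ((n + 1 : ℕ) : ℤ)))
      = ((2 * d + μ - 1).choose μ : ℕ) := by
    rw [Finset.prod_const, Finset.card_univ, Fintype.card_fin, hP, ← pow_mul]
    obtain ⟨e, he⟩ : ∃ e, 2 * d = e + 1 := ⟨2 * d - 1, by omega⟩
    rw [he, PowerSeries.mk_one_pow_eq_mk_choose_add ℤ e, PowerSeries.coeff_mk]
    have : e + 1 + μ - 1 = e + μ := by omega
    rw [this, Nat.choose_symm_add]
  rw [PowerSeries.coeff_prod] at h1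
  simp only [PowerSeries.coeff_mk] at h1
  have h2 : ∑ l ∈ Finset.finsuppAntidiag (Finset.univ : Finset (Fin d)) μ, ∏ k, (l k + 1)
      = (2 * d + μ - 1).choose μ := by exact_mod_cast h1
  rw [← h2, calN]
  symm
  refine Finset.sum_bij' (fun l _ => fun k => l k + 1)
    (fun i _ => Finsupp.equivFunOnFinite.symm (fun k => i k - 1)) ?_ ?_ ?_ ?_ ?_
  · intro l hl
    rw [Finset.mem_finsuppAntidiag] at hl
    simp only [smolyakIndices, Finset.mem_filter, Fintype.mem_piFinset, Finset.mem_Icc]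
    refine ⟨fun k => ⟨by omega, ?_⟩, ?_⟩
    · have := Finset.single_le_sum (f := fun k => l k) (fun _ _ => Nat.zero_le _) (Finset.mem_univ k)
      have h3 : ∑ x, l x = μ := hl.1
      omega
    · rw [Finset.sum_add_distrib, hl.1]
      simp [add_comm]
  · intro i hi
    simp only [smolyakIndices, Finset.mem_filter, Fintype.mem_piFinset, Finset.mem_Icc] at hi
    rw [Finset.mem_finsuppAntidiag]
    refine ⟨?_, by simp⟩
    have h3 : ∑ k, i k = ∑ k, (i k - 1) + d := by
      calc ∑ k, i k = ∑ k, ((i k - 1) + 1) :=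
            Finset.sum_congr rfl fun k _ => by have := (hi.1 k).1; omega
        _ = _ := by rw [Finset.sum_add_distrib]; simp
    have h4 := hi.2
    simp only [Finsupp.coe_equivFunOnFinite_symm]
    omega
  · intro l hl
    ext k
    simp
  · intro i hi
    simp only [smolyakIndices, Finset.mem_filter, Fintype.mem_piFinset, Finset.mem_Icc] at hi
    funext k
    have := (hi.1 k).1
    simp only [Finsupp.coe_equivFunOnFinite_symm]
    omega
  · intro l hl
    rfl
end
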